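/- Let d ≥ 3 and β > d. There exist constants c > 0 and C ≥ 1, depending only on d and β, such that for all reals R ≥ 1 and L ≥ 1: Σ_{n, n' ∈ ℤ^d, |n|_∞ ≥ L, |n'|_∞ ≥ L, |n−n'|_∞ ≤ L/R} (1+|n−n'|)^{−β} |n|^{−2d−2} |n'|^{−2d−2} [ (d²−2d)² n₁ n₁' (n·n') + (d²−2d)( |n|² (n₁')² + |n'|² n₁² ) + |n|² |n'|² ] ≥ (c − C R^{−2}) L^{−3d}, where n₁, n₁' denote the first coordinates of n, n' and n·n' the Euclidean inner product. -/

import Mathlib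

/-!
The bracket is the inner product of `a n₁ n + |n|² e₁` and `a n₁' n' + |n'|² e₁`, where
`a = d² - 2d`; it is bounded in absolute value by `(a + 1)² |n|² |n'|²`
(`abs_bracket_le`), and it is nonnegative as soon as `R ≥ a` (`bracket_nonneg`): either
`n₁ n₁' ≥ 0`, and closeness of `n` and `n'` gives `n · n' ≥ 0`, or `n₁` and `n₁'` have opposite
signs, so that `4 |n₁ n₁'| ≤ (n₁ - n₁')² ≤ (L / R)²` and the negative term is absorbed by
`|n|² |n'|²`.

For `R ≥ a` all terms are therefore nonnegative, and the diagonal pairs `(n, n)` with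
`n ∈ [q, 2q)^d`, `q = ⌈L⌉`, already contribute a multiple of `L^d · L^{-4d}`
(`le_tsum_pairTerm`). For `R < a` an upper bound of order `L^{-3d}` on the sum of the absolute values
suffices (`summable_and_abs_tsum_le`), since `c - C R⁻²` is then very negative when `C` is large.
That upper bound follows from `|n|^{-2d} |n'|^{-2d} ≤ |n|^{-4d} + |n'|^{-4d}`, the summability of
`(1 + |m|)^{-β}`, and the tail estimate `∑_{|n|_∞ ≥ L} |n|_∞^{-4d} ≲ L^{-3d}`
(`exists_tail_bound`), obtained by writing `n = q m + r` with `q = ⌊L⌋`, `r ∈ [0, q)^d`.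
-/

/-- Euclidean norm of a lattice point of `ℤ^d`. -/
noncomputable def zEucNorm {d : ℕ} (n : Fin d → ℤ) : ℝ :=
  Real.sqrt (∑ i, ((n i : ℝ)) ^ 2)

/-- ℓ∞ norm of a lattice point of `ℤ^d`. -/
noncomputable def zSupNorm {d : ℕ} (n : Fin d → ℤ) : ℝ :=
  ((Finset.univ.sup fun i => (n i).natAbs : ℕ) : ℝ)

/-! ### Norms of lattice points -/

lemma zSupNorm_eq_norm {d : ℕ} (n : Fin d → ℤ) : zSupNorm n = ‖n‖ := by
  unfold zSupNorm
  apply le_antisymm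
  · obtain h | ⟨i, -, hi⟩ := (Finset.univ : Finset (Fin d)).eq_empty_or_nonempty.imp id
      (fun h => Finset.exists_mem_eq_sup _ h (fun i => (n i).natAbs))
    · simp [h]
    · rw [hi]
      have := norm_le_pi_norm n i
      rwa [Int.norm_eq_abs, ← Int.cast_abs, ← Nat.cast_natAbs] at this
  · rw [pi_norm_le_iff_of_nonneg (by positivity)]
    intro i
    rw [Int.norm_eq_abs, ← Int.cast_abs, ← Nat.cast_natAbs]
    exact_mod_cast Finset.le_sup (f := fun i => (n i).natAbs) (Finset.mem_univ i)

lemma zEucNorm_nonneg {d : ℕ} (n : Fin d → ℤ) : 0 ≤ zEucNorm n := Real.sqrt_nonneg _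

lemma zEucNorm_sq {d : ℕ} (n : Fin d → ℤ) : zEucNorm n ^ 2 = ∑ i, (n i : ℝ) ^ 2 :=
  Real.sq_sqrt (Finset.sum_nonneg fun _ _ => sq_nonneg _)

lemma abs_coord_le_zEucNorm {d : ℕ} (n : Fin d → ℤ) (i : Fin d) :
    |(n i : ℝ)| ≤ zEucNorm n := by
  refine abs_le_of_sq_le_sq ?_ (zEucNorm_nonneg n)
  rw [zEucNorm_sq]
  exact Finset.single_le_sum (f := fun i => (n i : ℝ) ^ 2) (fun i _ => sq_nonneg _)
    (Finset.mem_univ i)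

lemma norm_le_zEucNorm {d : ℕ} (n : Fin d → ℤ) : ‖n‖ ≤ zEucNorm n := by
  rw [pi_norm_le_iff_of_nonneg (zEucNorm_nonneg n)]
  intro i
  rw [Int.norm_eq_abs]
  exact abs_coord_le_zEucNorm n i

lemma zEucNorm_sq_le {d : ℕ} (n : Fin d → ℤ) : zEucNorm n ^ 2 ≤ d * ‖n‖ ^ 2 := by
  rw [zEucNorm_sq]
  calc ∑ i, (n i : ℝ) ^ 2 ≤ ∑ _i : Fin d, ‖n‖ ^ 2 := by
        apply Finset.sum_le_sum
        intro i _
        have := norm_le_pi_norm n i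
        rw [Int.norm_eq_abs] at this
        exact sq_le_sq.mpr (by rwa [abs_of_nonneg (norm_nonneg n)])
    _ = d * ‖n‖ ^ 2 := by simp

lemma zEucNorm_le {d : ℕ} (n : Fin d → ℤ) : zEucNorm n ≤ d * ‖n‖ := by
  apply abs_le_of_sq_le_sq' _ (by positivity) |>.2
  refine (zEucNorm_sq_le n).trans ?_
  rw [mul_pow]
  gcongr
  exact_mod_cast Nat.le_self_pow two_ne_zero d

/-! ### The bracket -/

/-- Here `X, Y` stand for `|n|, |n'|`, `u, v` for `n₁, n₁'` and `P` for `n · n'`. -/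
lemma abs_bracket_le {a X Y u v P : ℝ} (ha : 0 ≤ a) (hX : 0 ≤ X) (hY : 0 ≤ Y)
    (hu : |u| ≤ X) (hv : |v| ≤ Y) (hP : |P| ≤ X * Y) :
    |a ^ 2 * u * v * P + a * (X ^ 2 * v ^ 2 + Y ^ 2 * u ^ 2) + X ^ 2 * Y ^ 2|
      ≤ (a + 1) ^ 2 * (X ^ 2 * Y ^ 2) := by
  have h1 : |u * v * P| ≤ X ^ 2 * Y ^ 2 := by
    rw [abs_mul, abs_mul]
    calc |u| * |v| * |P| ≤ X * Y * (X * Y) := by gcongr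
      _ = _ := by ring
  have hu2 : u ^ 2 ≤ X ^ 2 := sq_le_sq.mpr (by rwa [abs_of_nonneg hX])
  have hv2 : v ^ 2 ≤ Y ^ 2 := sq_le_sq.mpr (by rwa [abs_of_nonneg hY])
  have h2 : X ^ 2 * v ^ 2 ≤ X ^ 2 * Y ^ 2 := by gcongr
  have h3 : Y ^ 2 * u ^ 2 ≤ X ^ 2 * Y ^ 2 := by rw [mul_comm]; gcongr
  have h4 : 0 ≤ a * (X ^ 2 * v ^ 2 + Y ^ 2 * u ^ 2) := by positivity
  have h5 : a * (X ^ 2 * v ^ 2 + Y ^ 2 * u ^ 2) ≤ a * (2 * (X ^ 2 * Y ^ 2)) := by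
    gcongr; linarith
  obtain ⟨h6, h7⟩ := abs_le.mp h1
  have h8 := mul_le_mul_of_nonneg_left h6 (sq_nonneg a)
  have h9 := mul_le_mul_of_nonneg_left h7 (sq_nonneg a)
  have h10 : 0 ≤ X ^ 2 * Y ^ 2 := by positivity
  have h11 : 0 ≤ a * (X ^ 2 * Y ^ 2) := by positivity
  rw [abs_le]
  constructor <;> nlinarith

/-- Nonnegativity of the bracket for nearby points: `hclose` provides `n · n' ≥ 0`, used when
`n₁` and `n₁'` have the same sign; `huv` makes `n₁ n₁'` small when the signs are opposite. -/
lemma bracket_nonneg {a X Y u v P L : ℝ} (ha : 0 ≤ a) (hL : 0 ≤ L) (hX : L ≤ X) (hY : L ≤ Y)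
    (hP : |P| ≤ X * Y) (hclose : 0 ≤ P) (huv : a * |u - v| ≤ L) :
    0 ≤ a ^ 2 * u * v * P + a * (X ^ 2 * v ^ 2 + Y ^ 2 * u ^ 2) + X ^ 2 * Y ^ 2 := by
  have h4 : 0 ≤ a * (X ^ 2 * v ^ 2 + Y ^ 2 * u ^ 2) := by positivity
  have hX0 := hL.trans hX
  have hY0 := hL.trans hY
  have h1 : a ^ 2 * (u - v) ^ 2 ≤ L ^ 2 := by
    rw [← sq_abs (u - v), ← mul_pow]
    gcongr
  have h2 : L ^ 2 ≤ X * Y := by rw [sq]; gcongr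
  have h3 : -(X * Y) ≤ a ^ 2 * u * v := by
    nlinarith [mul_nonneg (sq_nonneg a) (sq_nonneg (u + v)), sq_nonneg L]
  have h5 : P ≤ X * Y := (le_abs_self _).trans hP
  have h6 : -(X * Y) * P ≤ a ^ 2 * u * v * P := by gcongr
  have h7 : X * Y * P ≤ X * Y * (X * Y) := by gcongr
  nlinarith

lemma abs_inner_le {d : ℕ} (n n' : Fin d → ℤ) :
    |∑ i, (n i : ℝ) * (n' i : ℝ)| ≤ zEucNorm n * zEucNorm n' := by
  refine abs_le_of_sq_le_sq ?_ (mul_nonneg (zEucNorm_nonneg _) (zEucNorm_nonneg _))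
  rw [mul_pow, zEucNorm_sq, zEucNorm_sq]
  exact Finset.sum_mul_sq_le_sq_mul_sq _ _ _

lemma two_mul_inner {d : ℕ} (n n' : Fin d → ℤ) :
    2 * ∑ i, (n i : ℝ) * (n' i : ℝ) =
      zEucNorm n ^ 2 + zEucNorm n' ^ 2 - zEucNorm (n - n') ^ 2 := by
  rw [zEucNorm_sq, zEucNorm_sq, zEucNorm_sq, Finset.mul_sum, ← Finset.sum_add_distrib,
    ← Finset.sum_sub_distrib]
  refine Finset.sum_congr rfl fun i _ => ?_
  simp only [Pi.sub_apply, Int.cast_sub]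
  ring

/-- The summand of the double sum; `i₀` is the index of the distinguished coordinate. -/
noncomputable def pairTerm (d : ℕ) (β : ℝ) (i₀ : Fin d) (n n' : Fin d → ℤ) : ℝ :=
  (1 + zEucNorm (n - n')) ^ (-β) *
    (zEucNorm n ^ (-(2 * (d : ℝ)) - 2) *
      zEucNorm n' ^ (-(2 * (d : ℝ)) - 2) *
    (((d : ℝ) ^ 2 - 2 * d) ^ 2 * (n i₀ : ℝ) *
        (n' i₀ : ℝ) * (∑ i, (n i : ℝ) * (n' i : ℝ)) +
      ((d : ℝ) ^ 2 - 2 * d) *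
        (zEucNorm n ^ 2 * (n' i₀ : ℝ) ^ 2 +
         zEucNorm n' ^ 2 * (n i₀ : ℝ) ^ 2) +
      zEucNorm n ^ 2 * zEucNorm n' ^ 2))

/-- The pairs of lattice points over which the sum runs. -/
abbrev NearPair (d : ℕ) (R L : ℝ) : Type :=
  {p : (Fin d → ℤ) × (Fin d → ℤ) //
    L ≤ zSupNorm p.1 ∧ L ≤ zSupNorm p.2 ∧ zSupNorm (p.1 - p.2) ≤ L / R}

lemma le_coeff {d : ℕ} (hd : 3 ≤ d) : (d : ℝ) ≤ (d : ℝ) ^ 2 - 2 * d := by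
  have : (3 : ℝ) ≤ d := by exact_mod_cast hd
  nlinarith

lemma coeff_nonneg {d : ℕ} (hd : 3 ≤ d) : 0 ≤ (d : ℝ) ^ 2 - 2 * d :=
  (Nat.cast_nonneg d).trans (le_coeff hd)

lemma rpow_weight {x : ℝ} (hx : 0 ≤ x) (d : ℕ) :
    x ^ (-(2 * (d : ℝ)) - 2) = (x ^ (2 * d + 2))⁻¹ := by
  rw [← Real.rpow_natCast, ← Real.rpow_neg hx]
  congr 1
  push_cast
  ring

lemma pairTerm_nonneg {d : ℕ} (hd : 3 ≤ d) (β : ℝ) (i₀ : Fin d) {R L : ℝ} (hL : 1 ≤ L)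
    (hR : (d : ℝ) ^ 2 - 2 * d ≤ R) (p : NearPair d R L) : 0 ≤ pairTerm d β i₀ p.1.1 p.1.2 := by
  obtain ⟨⟨n, n'⟩, h1, h2, h3⟩ := p
  simp only [zSupNorm_eq_norm] at h1 h2 h3
  have hd3 : (3 : ℝ) ≤ d := by exact_mod_cast hd
  have hRpos : 0 < R := by linarith [le_coeff hd]
  have hn := h1.trans (norm_le_zEucNorm n)
  have hn' := h2.trans (norm_le_zEucNorm n')
  unfold pairTerm
  refine mul_nonneg (Real.rpow_nonneg (by linarith [zEucNorm_nonneg (n - n')]) _) ?_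
  refine mul_nonneg (mul_nonneg (Real.rpow_nonneg (zEucNorm_nonneg _) _)
    (Real.rpow_nonneg (zEucNorm_nonneg _) _)) ?_
  have hRL : R * ‖n - n'‖ ≤ L := by
    rw [le_div_iff₀ hRpos] at h3
    linarith
  refine bracket_nonneg (L := L) (coeff_nonneg hd) (by linarith) hn hn' (abs_inner_le n n') ?_ ?_
  · have := two_mul_inner n n'
    have h4 := zEucNorm_sq_le (n - n')
    have h5 : (R * ‖n - n'‖) ^ 2 ≤ L ^ 2 := by gcongr
    have h6 : (d : ℝ) ≤ R ^ 2 := by nlinarith [le_coeff hd]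
    have h7 : (d : ℝ) * ‖n - n'‖ ^ 2 ≤ R ^ 2 * ‖n - n'‖ ^ 2 := by gcongr
    have h8 : L ^ 2 ≤ zEucNorm n ^ 2 := by gcongr
    nlinarith [sq_nonneg (zEucNorm n')]
  · have := norm_le_pi_norm (n - n') i₀
    rw [Int.norm_eq_abs, Pi.sub_apply, Int.cast_sub] at this
    exact (mul_le_mul hR this (abs_nonneg _) hRpos.le).trans hRL

/-- Weight `|n|_∞^{-4d}` restricted to `|n|_∞ ≥ L`. -/
noncomputable def tailWeight (d : ℕ) (L : ℝ) (n : Fin d → ℤ) : ℝ :=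
  if L ≤ ‖n‖ then (‖n‖ ^ (4 * d))⁻¹ else 0

lemma tailWeight_nonneg (d : ℕ) (L : ℝ) (n : Fin d → ℤ) : 0 ≤ tailWeight d L n := by
  unfold tailWeight
  split_ifs <;> positivity

lemma abs_pairTerm_le {d : ℕ} (hd : 3 ≤ d) (i₀ : Fin d) {β : ℝ} (hβ : 0 ≤ β) {R L : ℝ} (hL : 1 ≤ L)
    (p : NearPair d R L) :
    |pairTerm d β i₀ p.1.1 p.1.2| ≤ ((d : ℝ) ^ 2 - 2 * d + 1) ^ 2 *
      ((1 + ‖p.1.1 - p.1.2‖) ^ (-β) * (tailWeight d L p.1.1 + tailWeight d L p.1.2)) := by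
  obtain ⟨⟨n, n'⟩, h1, h2, h3⟩ := p
  simp only [zSupNorm_eq_norm] at h1 h2 h3
  simp only
  have hn := norm_le_zEucNorm n
  have hn' := norm_le_zEucNorm n'
  have hn0 : 0 < ‖n‖ := by linarith
  have hn'0 : 0 < ‖n'‖ := by linarith
  have hX : 0 < zEucNorm n := by linarith
  have hY : 0 < zEucNorm n' := by linarith
  have hB := abs_bracket_le (coeff_nonneg hd) hX.le hY.le
    (abs_coord_le_zEucNorm n i₀) (abs_coord_le_zEucNorm n' i₀)
    (abs_inner_le n n')
  unfold pairTerm tailWeight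
  rw [if_pos h1, if_pos h2, rpow_weight hX.le, rpow_weight hY.le, abs_mul, abs_mul,
    abs_of_nonneg (Real.rpow_nonneg (by linarith [zEucNorm_nonneg (n - n')]) _),
    abs_of_nonneg (by positivity : 0 ≤ (zEucNorm n ^ (2 * d + 2))⁻¹ * (zEucNorm n' ^ (2 * d + 2))⁻¹)]
  have hw : (1 + zEucNorm (n - n')) ^ (-β) ≤ (1 + ‖n - n'‖) ^ (-β) :=
    Real.rpow_le_rpow_of_nonpos (by positivity) (by linarith [norm_le_zEucNorm (n - n')])
      (by linarith)
  have hAM : (‖n‖ ^ (2 * d))⁻¹ * (‖n'‖ ^ (2 * d))⁻¹ ≤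
      (‖n‖ ^ (4 * d))⁻¹ + (‖n'‖ ^ (4 * d))⁻¹ := by
    have e : ∀ x : ℝ, (x ^ (4 * d))⁻¹ = ((x ^ (2 * d))⁻¹) ^ 2 := by
      intro x
      rw [inv_pow, ← pow_mul]
      congr 2
      ring
    rw [e, e]
    nlinarith [sq_nonneg ((‖n‖ ^ (2 * d))⁻¹ - (‖n'‖ ^ (2 * d))⁻¹),
      sq_nonneg ((‖n‖ ^ (2 * d))⁻¹ + (‖n'‖ ^ (2 * d))⁻¹)]
  have hmain : (zEucNorm n ^ (2 * d + 2))⁻¹ * (zEucNorm n' ^ (2 * d + 2))⁻¹ *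
      (((d : ℝ) ^ 2 - 2 * d + 1) ^ 2 * (zEucNorm n ^ 2 * zEucNorm n' ^ 2)) ≤
      ((d : ℝ) ^ 2 - 2 * d + 1) ^ 2 * ((‖n‖ ^ (4 * d))⁻¹ + (‖n'‖ ^ (4 * d))⁻¹) := by
    have e : (zEucNorm n ^ (2 * d + 2))⁻¹ * (zEucNorm n' ^ (2 * d + 2))⁻¹ *
      (((d : ℝ) ^ 2 - 2 * d + 1) ^ 2 * (zEucNorm n ^ 2 * zEucNorm n' ^ 2)) =
      ((d : ℝ) ^ 2 - 2 * d + 1) ^ 2 *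
        ((zEucNorm n ^ (2 * d))⁻¹ * (zEucNorm n' ^ (2 * d))⁻¹) := by
      rw [pow_add, pow_add]
      field_simp
    rw [e]
    refine mul_le_mul_of_nonneg_left (le_trans ?_ hAM) (sq_nonneg _)
    gcongr
  calc _ ≤ (1 + ‖n - n'‖) ^ (-β) * ((zEucNorm n ^ (2 * d + 2))⁻¹ * (zEucNorm n' ^ (2 * d + 2))⁻¹ *
      (((d : ℝ) ^ 2 - 2 * d + 1) ^ 2 * (zEucNorm n ^ 2 * zEucNorm n' ^ 2))) := by
        gcongr
    _ ≤ (1 + ‖n - n'‖) ^ (-β) * (((d : ℝ) ^ 2 - 2 * d + 1) ^ 2 *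
          ((‖n‖ ^ (4 * d))⁻¹ + (‖n'‖ ^ (4 * d))⁻¹)) := by
        gcongr
    _ = _ := by ring

/-! ### Lattice sums -/

lemma summable_prod_fin (d : ℕ) {f : ℤ → ℝ} (hf : Summable f) (h0 : ∀ k, 0 ≤ f k) :
    Summable fun m : Fin d → ℤ => ∏ i, f (m i) := by
  induction d with
  | zero => exact .of_finite
  | succ d ih =>
    rw [← (Fin.consEquiv fun _ : Fin (d + 1) => ℤ).summable_iff]
    refine (hf.mul_of_nonneg ih h0 fun m => Finset.prod_nonneg fun i _ => h0 _).congr ?_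
    rintro ⟨k, m⟩
    simp [Fin.prod_univ_succ, Fin.consEquiv]

lemma summable_one_add_abs_rpow {b : ℝ} (hb : 1 < b) :
    Summable fun k : ℤ => (1 + |(k : ℝ)|) ^ (-b) := by
  have h := Real.summable_abs_int_rpow hb
  refine Summable.of_norm_bounded_eventually h ?_
  rw [Filter.eventually_cofinite]
  refine (Set.finite_singleton (0 : ℤ)).subset fun k hk => ?_
  by_contra hk0
  apply hk
  have hpos : 0 < |(k : ℝ)| := abs_pos.mpr (by exact_mod_cast hk0)
  rw [Real.norm_of_nonneg (by positivity)]
  exact Real.rpow_le_rpow_of_nonpos hpos (by linarith) (by linarith)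

/-- Reduces to a product of one-dimensional sums through
`(1 + |m|_∞)^{-s} ≤ ∏ (1 + |m_i|)^{-s/d}`. -/
lemma summable_one_add_norm_rpow {d : ℕ} (hd : 0 < d) {s : ℝ} (hs : (d : ℝ) < s) :
    Summable fun m : Fin d → ℤ => (1 + ‖m‖) ^ (-s) := by
  have hd' : (0 : ℝ) < d := by exact_mod_cast hd
  have hb : 1 < s / d := by rwa [one_lt_div hd']
  refine Summable.of_nonneg_of_le (fun m => by positivity) (fun m => ?_)
    (summable_prod_fin d (summable_one_add_abs_rpow hb) fun k => by positivity)
  calc (1 + ‖m‖) ^ (-s) = ∏ _i : Fin d, (1 + ‖m‖) ^ (-(s / d)) := by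
        rw [Finset.prod_const, Finset.card_univ, Fintype.card_fin, ← Real.rpow_natCast,
          ← Real.rpow_mul (by positivity)]
        congr 1
        field_simp
    _ ≤ _ := by
        refine Finset.prod_le_prod (fun i _ => by positivity) fun i _ => ?_
        refine Real.rpow_le_rpow_of_nonpos (by positivity) ?_ (by linarith)
        have := norm_le_pi_norm m i
        rw [Int.norm_eq_abs] at this
        linarith

lemma summable_one_add_norm_inv_pow {d : ℕ} (hd : 0 < d) :
    Summable fun m : Fin d → ℤ => ((1 + ‖m‖) ^ (4 * d))⁻¹ := by
  have hd' : (0 : ℝ) < d := by exact_mod_cast hd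
  refine (summable_one_add_norm_rpow hd (s := (4 * d : ℕ)) (by push_cast; linarith)).congr
    fun m => ?_
  rw [Real.rpow_neg (by positivity), Real.rpow_natCast]

/-- Coordinatewise division with remainder by `q`. -/
def divRem (d q : ℕ) (hq : 0 < q) (n : Fin d → ℤ) : (Fin d → ℤ) × (Fin d → Fin q) :=
  (fun i => n i / q, fun i => ⟨(n i % q).toNat, by
    have h1 := Int.emod_nonneg (n i) (b := (q : ℤ)) (by omega)
    have h2 := Int.emod_lt_of_pos (n i) (b := (q : ℤ)) (by omega)
    omega⟩)

lemma divRem_injective (d q : ℕ) (hq : 0 < q) : Function.Injective (divRem d q hq) := by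
  intro n n' h
  have h1 := congrArg Prod.fst h
  have h2 := congrArg Prod.snd h
  funext i
  have h3 : n i / q = n' i / q := congrFun h1 i
  have h4 : (n i % q).toNat = (n' i % q).toNat := congrArg Fin.val (congrFun h2 i)
  have h5 := Int.emod_nonneg (n i) (b := (q : ℤ)) (by omega)
  have h6 := Int.emod_nonneg (n' i) (b := (q : ℤ)) (by omega)
  have h7 : n i % q = n' i % q := by omega
  rw [← Int.mul_ediv_add_emod (n i) q, ← Int.mul_ediv_add_emod (n' i) q, h3, h7]

/-- For `n = q m + r` outside the cube of radius `q`, the quotient `m` satisfies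
`1 + |m|_∞ ≤ 2 + |n|_∞ / q ≤ 3 |n|_∞ / q`. -/
lemma one_add_norm_divRem_le {d q : ℕ} (hq : 0 < q) {n : Fin d → ℤ} (hn : (q : ℝ) ≤ ‖n‖) :
    q * (1 + ‖(divRem d q hq n).1‖) ≤ 3 * ‖n‖ := by
  have hq' : (0 : ℝ) < q := by exact_mod_cast hq
  have h : ‖(divRem d q hq n).1‖ ≤ (‖n‖ + q) / q := by
    rw [pi_norm_le_iff_of_nonneg (by positivity)]
    intro i
    rw [le_div_iff₀ hq', Int.norm_eq_abs]
    have h1 := norm_le_pi_norm n i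
    rw [Int.norm_eq_abs] at h1
    change |((n i / q : ℤ) : ℝ)| * q ≤ _
    have h2 : ((n i : ℤ) : ℝ) = q * ((n i / q : ℤ) : ℝ) + ((n i % q : ℤ) : ℝ) := by
      exact_mod_cast (Int.mul_ediv_add_emod (n i) q).symm
    have h3 : (0 : ℝ) ≤ ((n i % q : ℤ) : ℝ) := by
      exact_mod_cast Int.emod_nonneg (n i) (b := (q : ℤ)) (by omega)
    have h4 : ((n i % q : ℤ) : ℝ) ≤ q := by
      exact_mod_cast (Int.emod_lt_of_pos (n i) (b := (q : ℤ)) (by omega)).le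
    obtain ⟨h5, h6⟩ := abs_le.mp h1
    rw [← abs_of_pos hq', ← abs_mul, abs_of_pos hq', abs_le]
    constructor <;> linarith
  rw [le_div_iff₀ hq'] at h
  linarith

/-- The tail sum `∑_{|n|_∞ ≥ L} |n|_∞^{-4d}` is `O(L^{-3d})`. -/
lemma exists_tail_bound {d : ℕ} (hd : 0 < d) :
    ∃ K : ℝ, 0 ≤ K ∧ ∀ L : ℝ, 1 ≤ L →
      Summable (tailWeight d L) ∧ ∑' n, tailWeight d L n ≤ K * (L ^ (3 * d))⁻¹ := by
  set w : (Fin d → ℤ) → ℝ := fun m => ((1 + ‖m‖) ^ (4 * d))⁻¹ with hw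
  have hws : Summable w := summable_one_add_norm_inv_pow hd
  have hw0 : ∀ m, 0 ≤ w m := fun m => by positivity
  have hW : 0 ≤ ∑' m, w m := tsum_nonneg hw0
  refine ⟨3 ^ (4 * d) * 2 ^ (3 * d) * ∑' m, w m, by positivity, fun L hL => ?_⟩
  set q := ⌊L⌋₊ with hqdef
  have hq : 0 < q := Nat.floor_pos.mpr hL
  have hq' : (0 : ℝ) < q := by exact_mod_cast hq
  have hq1 : (1 : ℝ) ≤ q := by exact_mod_cast hq
  have hqL : (q : ℝ) ≤ L := Nat.floor_le (by linarith)
  have hLq : L ≤ 2 * q := by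
    have := Nat.lt_floor_add_one L
    linarith
  have hone : HasSum (fun _ : Fin d → Fin q => (1 : ℝ)) ((q : ℝ) ^ d) := by
    have := hasSum_fintype (fun _ : Fin d → Fin q => (1 : ℝ))
    simpa using this
  have hgs : Summable fun x : (Fin d → ℤ) × (Fin d → Fin q) => w x.1 * 1 :=
    hws.mul_of_nonneg hone.summable hw0 fun _ => zero_le_one
  have hg : HasSum (fun x : (Fin d → ℤ) × (Fin d → Fin q) => w x.1 * 1)
      ((∑' m, w m) * (q : ℝ) ^ d) := hws.hasSum.mul hone hgs
  have hcomp := hgs.comp_injective (divRem_injective d q hq)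
  have hle : ∀ n, tailWeight d L n ≤
      (3 / q : ℝ) ^ (4 * d) * (w (divRem d q hq n).1 * 1) := by
    intro n
    unfold tailWeight
    split_ifs with h
    · have h1 := one_add_norm_divRem_le hq (hqL.trans h)
      have h2 : q * (1 + ‖(divRem d q hq n).1‖) / 3 ≤ ‖n‖ := by linarith
      calc (‖n‖ ^ (4 * d))⁻¹ ≤ ((q * (1 + ‖(divRem d q hq n).1‖) / 3) ^ (4 * d))⁻¹ := by
            gcongr
        _ = _ := by
            simp only [hw, mul_one]
            rw [div_pow, mul_pow, div_pow]
            field_simp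
    · have := hw0 (divRem d q hq n).1
      positivity
  have hs : Summable (tailWeight d L) :=
    Summable.of_nonneg_of_le (tailWeight_nonneg d L) hle (hcomp.mul_left _)
  refine ⟨hs, ?_⟩
  calc ∑' n, tailWeight d L n
      ≤ ∑' n, (3 / q : ℝ) ^ (4 * d) * (w (divRem d q hq n).1 * 1) :=
        hs.tsum_le_tsum hle (hcomp.mul_left _)
    _ = (3 / q : ℝ) ^ (4 * d) * ∑' n, (w (divRem d q hq n).1 * 1) := tsum_mul_left
    _ ≤ (3 / q : ℝ) ^ (4 * d) * ((∑' m, w m) * (q : ℝ) ^ d) := by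
        gcongr
        rw [← hg.tsum_eq]
        exact tsum_comp_le_tsum_of_inj hgs (fun x => by simpa using hw0 x.1)
          (divRem_injective d q hq)
    _ = 3 ^ (4 * d) * 2 ^ (3 * d) * (∑' m, w m) * (((2 * q : ℝ)) ^ (3 * d))⁻¹ := by
        have : (q : ℝ) ^ (4 * d) = q ^ (3 * d) * q ^ d := by rw [← pow_add]; congr 1; ring
        rw [div_pow, mul_pow, this]
        field_simp
    _ ≤ _ := by gcongr

/-- Absolute convergence, with a bound of order `L^{-3d}` uniform in `R`. -/
lemma summable_and_abs_tsum_le {d : ℕ} (hd : 3 ≤ d) (i₀ : Fin d) {β : ℝ} (hβ : (d : ℝ) < β) :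
    ∃ K : ℝ, 0 ≤ K ∧ ∀ R L : ℝ, 1 ≤ L →
      Summable (fun p : NearPair d R L => pairTerm d β i₀ p.1.1 p.1.2) ∧
      |∑' p : NearPair d R L, pairTerm d β i₀ p.1.1 p.1.2| ≤ K * (L ^ (3 * d))⁻¹ := by
  obtain ⟨K, hK, hT⟩ := exists_tail_bound (show 0 < d by omega)
  have hβ0 : 0 ≤ β := (Nat.cast_nonneg d).trans hβ.le
  set A := ((d : ℝ) ^ 2 - 2 * d + 1) ^ 2 with hA
  set w : (Fin d → ℤ) → ℝ := fun m => (1 + ‖m‖) ^ (-β) with hw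
  have hws : Summable w := summable_one_add_norm_rpow (by omega) hβ
  have hw0 : ∀ m, 0 ≤ w m := fun m => by positivity
  have hW : 0 ≤ ∑' m, w m := tsum_nonneg hw0
  refine ⟨A * (2 * (∑' m, w m) * K), by positivity, fun R L hL => ?_⟩
  obtain ⟨hs, hle⟩ := hT L hL
  have hh0 := tailWeight_nonneg d L
  have hprod : HasSum (fun x : (Fin d → ℤ) × (Fin d → ℤ) => w x.1 * tailWeight d L x.2)
      ((∑' m, w m) * ∑' n, tailWeight d L n) :=
    hws.hasSum.mul hs.hasSum (hws.mul_of_nonneg hs hw0 hh0)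
  -- The two shears `(n, n') ↦ (n - n', n)` and `(n, n') ↦ (n - n', n')` decouple the sum.
  let e₁ : (Fin d → ℤ) × (Fin d → ℤ) ≃ (Fin d → ℤ) × (Fin d → ℤ) :=
    ⟨fun x => (x.1 - x.2, x.1), fun x => (x.2, x.2 - x.1), fun x => by simp, fun x => by simp⟩
  let e₂ : (Fin d → ℤ) × (Fin d → ℤ) ≃ (Fin d → ℤ) × (Fin d → ℤ) :=
    ⟨fun x => (x.1 - x.2, x.2), fun x => (x.1 + x.2, x.2), fun x => by simp, fun x => by simp⟩
  have hG := ((e₁.hasSum_iff.mpr hprod).add (e₂.hasSum_iff.mpr hprod)).mul_left A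
  set G : (Fin d → ℤ) × (Fin d → ℤ) → ℝ := fun x =>
    A * (w (x.1 - x.2) * (tailWeight d L x.1 + tailWeight d L x.2)) with hGdef
  have hG' : HasSum G (A * ((∑' m, w m) * ∑' n, tailWeight d L n +
      (∑' m, w m) * ∑' n, tailWeight d L n)) := by
    have hGeq : ∀ x, G x = A * (w (x.1 - x.2) * tailWeight d L x.1 +
        w (x.1 - x.2) * tailWeight d L x.2) := fun x => by
      rw [← mul_add]
    rw [funext hGeq]
    exact hG
  have hG0 : ∀ x, 0 ≤ G x := fun x =>
    mul_nonneg (sq_nonneg _) (mul_nonneg (hw0 _) (add_nonneg (hh0 _) (hh0 _)))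
  have hGs : Summable fun p : NearPair d R L => G p.1 := hG'.summable.subtype _
  have hb : ∀ p : NearPair d R L, ‖pairTerm d β i₀ p.1.1 p.1.2‖ ≤ G p.1 :=
    fun p => abs_pairTerm_le hd i₀ hβ0 hL p
  refine ⟨Summable.of_norm_bounded hGs hb, ?_⟩
  calc |∑' p : NearPair d R L, pairTerm d β i₀ p.1.1 p.1.2|
      ≤ ∑' p : NearPair d R L, G p.1 := tsum_of_norm_bounded hGs.hasSum hb
    _ ≤ ∑' x, G x := tsum_comp_le_tsum_of_inj hG'.summable hG0 Subtype.val_injective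
    _ = A * (2 * (∑' m, w m) * ∑' n, tailWeight d L n) := by rw [hG'.tsum_eq]; ring
    _ ≤ A * (2 * (∑' m, w m) * (K * (L ^ (3 * d))⁻¹)) := by gcongr
    _ = _ := by ring

/-! ### Diagonal contribution -/

lemma le_pairTerm_diag {d : ℕ} (hd : 3 ≤ d) (β : ℝ) (i₀ : Fin d) {n : Fin d → ℤ} (hn : 0 < ‖n‖) :
    ((d * ‖n‖) ^ (4 * d))⁻¹ ≤ pairTerm d β i₀ n n := by
  have hX : 0 < zEucNorm n := hn.trans_le (norm_le_zEucNorm n)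
  have h0 : zEucNorm (n - n) = 0 := by simp [zEucNorm]
  unfold pairTerm
  rw [h0, rpow_weight hX.le, add_zero, Real.one_rpow, one_mul]
  have ha := coeff_nonneg hd
  have hP : ∑ i, (n i : ℝ) * (n i : ℝ) = zEucNorm n ^ 2 := by
    rw [zEucNorm_sq]
    exact Finset.sum_congr rfl fun i _ => (sq _).symm
  rw [hP]
  set u : ℝ := (n i₀ : ℝ)
  have hB : zEucNorm n ^ 4 ≤ ((d : ℝ) ^ 2 - 2 * d) ^ 2 * u * u * zEucNorm n ^ 2 +
      ((d : ℝ) ^ 2 - 2 * d) * (zEucNorm n ^ 2 * u ^ 2 + zEucNorm n ^ 2 * u ^ 2) +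
      zEucNorm n ^ 2 * zEucNorm n ^ 2 := by
    have h1 : 0 ≤ ((d : ℝ) ^ 2 - 2 * d) * (zEucNorm n ^ 2 * u ^ 2 + zEucNorm n ^ 2 * u ^ 2) := by
      positivity
    have h2 : 0 ≤ ((d : ℝ) ^ 2 - 2 * d) ^ 2 * (u ^ 2) * zEucNorm n ^ 2 := by positivity
    nlinarith
  calc ((d * ‖n‖) ^ (4 * d))⁻¹ ≤ (zEucNorm n ^ (4 * d))⁻¹ := by
        gcongr
        exact zEucNorm_le n
    _ = (zEucNorm n ^ (2 * d + 2))⁻¹ * (zEucNorm n ^ (2 * d + 2))⁻¹ * zEucNorm n ^ 4 := by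
        have e : zEucNorm n ^ (2 * d + 2) * zEucNorm n ^ (2 * d + 2) =
            zEucNorm n ^ (4 * d) * zEucNorm n ^ 4 := by
          rw [← pow_add, ← pow_add]
          congr 1
          ring
        rw [← mul_inv, e]
        field_simp
    _ ≤ _ := by gcongr

/-- The point `(q + r₁, …, q + r_d)` of the cube `[q, 2q)^d`. -/
def cubePoint (d q : ℕ) (r : Fin d → Fin q) : Fin d → ℤ := fun i => q + (r i : ℕ)

lemma norm_cubePoint_le {d q : ℕ} (r : Fin d → Fin q) : ‖cubePoint d q r‖ ≤ 2 * q := by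
  rw [pi_norm_le_iff_of_nonneg (by positivity)]
  intro i
  have h : ((r i : ℕ) : ℝ) ≤ q := by exact_mod_cast (r i).2.le
  rw [Int.norm_eq_abs]
  simp only [cubePoint]
  push_cast
  rw [abs_of_nonneg (by positivity)]
  linarith

lemma le_norm_cubePoint {d q : ℕ} (hd : 0 < d) (r : Fin d → Fin q) :
    (q : ℝ) ≤ ‖cubePoint d q r‖ := by
  refine le_trans ?_ (norm_le_pi_norm _ ⟨0, hd⟩)
  rw [Int.norm_eq_abs]
  simp only [cubePoint]
  push_cast
  rw [abs_of_nonneg (by positivity)]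
  simp

lemma cubePoint_injective (d q : ℕ) : Function.Injective (cubePoint d q) := by
  intro r r' h
  funext i
  have := congrFun h i
  simp only [cubePoint] at this
  exact Fin.ext (by omega)

/-- For `R ≥ d² - 2d` all terms are nonnegative, so the sum dominates the contribution of the
`⌈L⌉^d` diagonal pairs of cube points. -/
lemma le_tsum_pairTerm {d : ℕ} (hd : 3 ≤ d) (β : ℝ) (i₀ : Fin d) {R L : ℝ} (hR1 : 1 ≤ R) (hL : 1 ≤ L)
    (hR : (d : ℝ) ^ 2 - 2 * d ≤ R)
    (hs : Summable fun p : NearPair d R L => pairTerm d β i₀ p.1.1 p.1.2) :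
    ((4 * d : ℝ) ^ (4 * d))⁻¹ * (L ^ (3 * d))⁻¹ ≤
      ∑' p : NearPair d R L, pairTerm d β i₀ p.1.1 p.1.2 := by
  set q := ⌈L⌉₊ with hq
  have hLq : L ≤ q := Nat.le_ceil L
  have hqL : (q : ℝ) ≤ 2 * L := by
    have := Nat.ceil_lt_add_one (show 0 ≤ L by linarith)
    linarith
  have hmem : ∀ r : Fin d → Fin q, L ≤ ‖cubePoint d q r‖ := fun r =>
    hLq.trans (le_norm_cubePoint (by omega) r)
  let ψ : (Fin d → Fin q) → NearPair d R L := fun r =>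
    ⟨(cubePoint d q r, cubePoint d q r), by
      simp only [zSupNorm_eq_norm, sub_self, norm_zero]
      exact ⟨hmem r, hmem r, by positivity⟩⟩
  have hψ : Function.Injective ψ := fun r r' h =>
    cubePoint_injective d q (congrArg (fun p : NearPair d R L => p.1.1) h)
  have hd0 : (0 : ℝ) < d := by
    have : 0 < d := by omega
    exact_mod_cast this
  calc ((4 * d : ℝ) ^ (4 * d))⁻¹ * (L ^ (3 * d))⁻¹
      = L ^ d * (((4 * d : ℝ) * L) ^ (4 * d))⁻¹ := by
        have : L ^ (4 * d) = L ^ (3 * d) * L ^ d := by rw [← pow_add]; congr 1; ring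
        rw [mul_pow _ L, this]
        field_simp
    _ ≤ (q : ℝ) ^ d * (((4 * d : ℝ) * L) ^ (4 * d))⁻¹ := by gcongr
    _ = ∑ _r : Fin d → Fin q, (((4 * d : ℝ) * L) ^ (4 * d))⁻¹ := by simp
    _ ≤ ∑ r : Fin d → Fin q, pairTerm d β i₀ (ψ r).1.1 (ψ r).1.2 := by
        refine Finset.sum_le_sum fun r _ => ?_
        have hpos : 0 < ‖cubePoint d q r‖ := by linarith [hmem r]
        refine le_trans ?_ (le_pairTerm_diag hd β i₀ hpos)
        have h1 : d * ‖cubePoint d q r‖ ≤ 4 * d * L := by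
          have := norm_cubePoint_le r
          nlinarith
        exact inv_anti₀ (by positivity) (pow_le_pow_left₀ (by positivity) h1 _)
    _ = ∑' r : Fin d → Fin q, pairTerm d β i₀ (ψ r).1.1 (ψ r).1.2 := (tsum_fintype _).symm
    _ ≤ _ := tsum_comp_le_tsum_of_inj hs (pairTerm_nonneg hd β i₀ hL hR) hψ

/-- combined near-diagonal lower bound. For `d ≥ 3`, `β > d`,
the sum over pairs with `|n|_∞, |n'|_∞ ≥ L` and `|n-n'|_∞ ≤ L/R` of
`(1+|n-n'|)^{-β} |n|^{-2d-2} |n'|^{-2d-2} [(d²-2d)² n₁n₁'(n·n')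
  + (d²-2d)(|n|²(n₁')² + |n'|²n₁²) + |n|²|n'|²]`
is at least `(c - C R^{-2}) L^{-3d}`, for all `R, L ≥ 1`. -/
theorem neardiagonal_combined_lower_bound (d : ℕ) (hd : 3 ≤ d) (β : ℝ)
    (hβ : (d : ℝ) < β) :
    ∃ c C : ℝ, 0 < c ∧ 1 ≤ C ∧ ∀ R L : ℝ, 1 ≤ R → 1 ≤ L →
      Summable (fun p : {p : (Fin d → ℤ) × (Fin d → ℤ) //
          L ≤ zSupNorm p.1 ∧ L ≤ zSupNorm p.2 ∧ zSupNorm (p.1 - p.2) ≤ L / R} =>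
        (1 + zEucNorm (p.1.1 - p.1.2)) ^ (-β) *
          (zEucNorm p.1.1 ^ (-(2 * (d : ℝ)) - 2) *
            zEucNorm p.1.2 ^ (-(2 * (d : ℝ)) - 2) *
          (((d : ℝ) ^ 2 - 2 * d) ^ 2 * ((p.1.1 ⟨0, by omega⟩ : ℤ) : ℝ) *
              ((p.1.2 ⟨0, by omega⟩ : ℤ) : ℝ) * (∑ i, (p.1.1 i : ℝ) * (p.1.2 i : ℝ)) +
            ((d : ℝ) ^ 2 - 2 * d) *
              (zEucNorm p.1.1 ^ 2 * ((p.1.2 ⟨0, by omega⟩ : ℤ) : ℝ) ^ 2 +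
               zEucNorm p.1.2 ^ 2 * ((p.1.1 ⟨0, by omega⟩ : ℤ) : ℝ) ^ 2) +
            zEucNorm p.1.1 ^ 2 * zEucNorm p.1.2 ^ 2))) ∧
      (c - C * R ^ (-2 : ℤ)) * L ^ (-(3 * (d : ℝ))) ≤
        ∑' p : {p : (Fin d → ℤ) × (Fin d → ℤ) //
            L ≤ zSupNorm p.1 ∧ L ≤ zSupNorm p.2 ∧ zSupNorm (p.1 - p.2) ≤ L / R},
          (1 + zEucNorm (p.1.1 - p.1.2)) ^ (-β) *
            (zEucNorm p.1.1 ^ (-(2 * (d : ℝ)) - 2) *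
              zEucNorm p.1.2 ^ (-(2 * (d : ℝ)) - 2) *
            (((d : ℝ) ^ 2 - 2 * d) ^ 2 * ((p.1.1 ⟨0, by omega⟩ : ℤ) : ℝ) *
                ((p.1.2 ⟨0, by omega⟩ : ℤ) : ℝ) * (∑ i, (p.1.1 i : ℝ) * (p.1.2 i : ℝ)) +
              ((d : ℝ) ^ 2 - 2 * d) *
                (zEucNorm p.1.1 ^ 2 * ((p.1.2 ⟨0, by omega⟩ : ℤ) : ℝ) ^ 2 +
                 zEucNorm p.1.2 ^ 2 * ((p.1.1 ⟨0, by omega⟩ : ℤ) : ℝ) ^ 2) +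
              zEucNorm p.1.1 ^ 2 * zEucNorm p.1.2 ^ 2)) := by
  let i₀ : Fin d := ⟨0, by omega⟩
  -- `pairTerm` and `NearPair` unfold to the terms of the goal.
  change ∃ c C : ℝ, 0 < c ∧ 1 ≤ C ∧ ∀ R L : ℝ, 1 ≤ R → 1 ≤ L →
    Summable (fun p : NearPair d R L => pairTerm d β i₀ p.1.1 p.1.2) ∧
    (c - C * R ^ (-2 : ℤ)) * L ^ (-(3 * (d : ℝ))) ≤
      ∑' p : NearPair d R L, pairTerm d β i₀ p.1.1 p.1.2
  obtain ⟨K, hK, hb⟩ := summable_and_abs_tsum_le hd i₀ hβ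
  have hd3 : (3 : ℝ) ≤ d := by exact_mod_cast hd
  set a := (d : ℝ) ^ 2 - 2 * d with ha
  have ha1 : 1 ≤ a := by linarith [le_coeff hd]
  set c := ((4 * d : ℝ) ^ (4 * d))⁻¹ with hc
  have hc0 : 0 < c := by positivity
  -- With this `C`, the left side is at most `-K L^{-3d}` whenever `R ≤ a`.
  refine ⟨c, (c + K + 1) * a ^ 2, hc0, by nlinarith, fun R L hR hL => ?_⟩
  obtain ⟨hs, hle⟩ := hb R L hL
  refine ⟨hs, ?_⟩
  have hLpow : L ^ (-(3 * (d : ℝ))) = (L ^ (3 * d))⁻¹ := by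
    rw [← Real.rpow_natCast, ← Real.rpow_neg (by linarith)]
    push_cast
    rfl
  have hRpow : R ^ (-2 : ℤ) = (R ^ 2)⁻¹ := by
    rw [zpow_neg]
    rfl
  rw [hLpow, hRpow]
  have hL0 : 0 ≤ (L ^ (3 * d))⁻¹ := by positivity
  rcases le_total a R with h | h
  · refine le_trans ?_ (le_tsum_pairTerm hd β i₀ hR hL h hs)
    refine mul_le_mul_of_nonneg_right ?_ hL0
    have : 0 ≤ (c + K + 1) * a ^ 2 * (R ^ 2)⁻¹ := by positivity
    linarith
  · refine le_trans ?_ (abs_le.mp hle).1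
    rw [← neg_mul]
    refine mul_le_mul_of_nonneg_right ?_ hL0
    have h1 : 1 ≤ a ^ 2 * (R ^ 2)⁻¹ := by
      rw [← div_eq_mul_inv, one_le_div (by positivity)]
      gcongr
    have h2 : c + K + 1 ≤ (c + K + 1) * a ^ 2 * (R ^ 2)⁻¹ := by
      rw [mul_assoc]
      exact le_mul_of_one_le_right (by positivity) h1
    linarith
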